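/- For every inverse temperature β ∈ (0,∞), every exponent q ∈ (0,2) and every range exponent α ∈ (1,2], there exists a constant c_β > 0 (depending only on β, α and q) such that for every integer N ≥ 1, the variance of the height at the origin under the discrete q-SOS long-range chain satisfies c_β ≤ Var^{q-SOS}_{N,β,α}[φ(0)]. -/

import Mathlib

noncomputable section

/-- Configurations of the long-range chain of length `N`: integer-valued height functions
on `ℤ` vanishing outside `{-N, …, N}`. -/
def ChainConfig (N : ℕ) : Type :=
  {φ : ℤ → ℤ // ∀ k : ℤ, (N : ℤ) < |k| → φ k = 0}

/-- Energy `β ∑_{i ≠ j} |φ(i) − φ(j)|^q / |i − j|^α` of a configuration of the long-range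
chain with potential exponent `q` and range exponent `α`. -/
def chainEnergy (β α q : ℝ) (φ : ℤ → ℤ) : ℝ :=
  β * ∑' p : ℤ × ℤ,
      if p.1 = p.2 then 0
      else |((φ p.1 - φ p.2 : ℤ) : ℝ)| ^ q / |((p.1 - p.2 : ℤ) : ℝ)| ^ α

/-- Boltzmann weight of a configuration. -/
def chainWeight (β α q : ℝ) (φ : ℤ → ℤ) : ℝ :=
  Real.exp (-chainEnergy β α q φ)

/-- Partition function of the long-range chain. -/
def chainZ (N : ℕ) (β α q : ℝ) : ℝ :=
  ∑' φ : ChainConfig N, chainWeight β α q φ.val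

/-- Mean of the height at the origin. -/
def chainMean (N : ℕ) (β α q : ℝ) : ℝ :=
  (∑' φ : ChainConfig N, ((φ.val 0 : ℤ) : ℝ) * chainWeight β α q φ.val) / chainZ N β α q

/-- Variance of the height at the origin under the long-range chain `μ_{N,β,α}`
(with potential exponent `q`; `q = 2` is the discrete Gaussian chain,
`q ∈ (0,2)` the `q`-SOS chain). -/
def chainVar (N : ℕ) (β α q : ℝ) : ℝ :=
  (∑' φ : ChainConfig N, ((φ.val 0 : ℤ) : ℝ) ^ 2 * chainWeight β α q φ.val) / chainZ N β α q
    - chainMean N β α q ^ 2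

end

/-!
The energy is a sum of terms `|φ i - φ j| ^ q` with `q ≤ 2`, so it satisfies a parallelogram
inequality `E (φ + ψ) + E (φ - ψ) ≤ 2 * (E φ + E ψ)`, and by AM-GM the Boltzmann weights satisfy
`2 * w φ * w ψ ≤ w (φ + ψ) + w (φ - ψ)`. For the unit spike `ψ` at the origin, `w ψ > 0` does not
depend on `N`, and the inequality says that heights `±1` at the origin are together at least
`2 * w ψ` times as likely as height `0`. Hence the height is nonzero with probability bounded
below, while its mean vanishes by symmetry.
-/

open Real Filter Asymptotics MeasureTheory

theorem norm_add_rpow_add_norm_sub_rpow_le {E : Type*} [NormedAddCommGroup E]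
    [InnerProductSpace ℝ E] {q : ℝ} (hq₀ : 0 ≤ q) (hq₂ : q ≤ 2) (x y : E) :
    ‖x + y‖ ^ q + ‖x - y‖ ^ q ≤ 2 * (‖x‖ ^ q + ‖y‖ ^ q) := by
  have hp₀ : 0 ≤ q / 2 := by linarith
  have hp₁ : q / 2 ≤ 1 := by linarith
  have rpow_eq_sq_rpow (z : E) : ‖z‖ ^ q = (‖z‖ ^ 2) ^ (q / 2) := by
    rw [← rpow_natCast_mul (norm_nonneg z)]
    congr 1
    push_cast
    ring
  have midpoint_concave := (concaveOn_rpow hp₀ hp₁).2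
    (sq_nonneg ‖x + y‖) (sq_nonneg ‖x - y‖)
    (one_half_pos (α := ℝ)).le one_half_pos.le (add_halves 1)
  have parallelogram :
      (1 / 2 : ℝ) • ‖x + y‖ ^ 2 + (1 / 2 : ℝ) • ‖x - y‖ ^ 2 = ‖x‖ ^ 2 + ‖y‖ ^ 2 := by
    have := parallelogram_law_with_norm ℝ x y
    simp only [smul_eq_mul]
    linarith
  have subadditive := rpow_add_le_add_rpow (sq_nonneg ‖x‖) (sq_nonneg ‖y‖) hp₀ hp₁
  simp only [rpow_eq_sq_rpow]
  rw [parallelogram] at midpoint_concave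
  simp only [smul_eq_mul] at midpoint_concave
  linarith

theorem two_mul_exp_le_exp_add_exp {x y z : ℝ} (h : 2 * x ≤ y + z) :
    2 * exp x ≤ exp y + exp z := by
  have exp_eq_sq (t : ℝ) : exp t = exp (t / 2) ^ 2 := by
    rw [← exp_nat_mul]
    congr 1
    push_cast
    ring
  calc 2 * exp x ≤ 2 * exp (y / 2 + z / 2) := by gcongr; linarith
    _ = 2 * exp (y / 2) * exp (z / 2) := by rw [exp_add, mul_assoc]
    _ ≤ exp (y / 2) ^ 2 + exp (z / 2) ^ 2 := two_mul_le_add_sq _ _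
    _ = exp y + exp z := by rw [← exp_eq_sq, ← exp_eq_sq]

theorem summable_abs_int_pow_mul_exp_neg_mul_abs_rpow {c q : ℝ} (hc : 0 < c) (hq : 0 < q)
    (m : ℕ) : Summable fun n : ℤ => |(n : ℝ)| ^ m * exp (-c * |(n : ℝ)| ^ q) := by
  have abs_tendsto : Tendsto (fun n : ℤ => |(n : ℝ)|) cofinite atTop := by
    rw [← cocompact_eq_cofinite]
    exact tendsto_norm_cocompact_atTop (E := ℤ)
  have exp_decay : (fun n : ℤ => exp (-c * |(n : ℝ)| ^ q)) =O[cofinite]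
      fun n : ℤ => (|(n : ℝ)| ^ q) ^ (-(m + 2) / q) :=
    ((isLittleO_exp_neg_mul_rpow_atTop hc _).comp_tendsto
      ((tendsto_rpow_atTop hq).comp abs_tendsto)).isBigO
  refine summable_of_isBigO (summable_abs_int_rpow one_lt_two)
    (((isBigO_refl (fun n : ℤ => |(n : ℝ)| ^ m) _).mul exp_decay).congr' .rfl ?_)
  filter_upwards [abs_tendsto.eventually_gt_atTop 0] with n hn
  rw [← rpow_mul hn.le, mul_div_cancel₀ _ hq.ne', ← rpow_natCast, ← rpow_add hn]
  congr 1
  ring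

theorem summable_pi_prod {ι κ : Type*} [Fintype ι] [Countable κ] {𝕜 : Type*} [RCLike 𝕜]
    {f : ι → κ → 𝕜} (hf : ∀ i, Summable (f i)) : Summable fun x : ι → κ => ∏ i, f i (x i) := by
  let : MeasurableSpace κ := ⊤
  have pi_count : Measure.pi (fun _ : ι => (Measure.count : Measure κ)) = Measure.count :=
    Measure.ext_of_singleton fun x => by simp [Measure.pi_singleton]
  rw [← summable_norm_iff, ← integrable_count_iff, ← pi_count]
  exact Integrable.fintype_prod_dep fun i => integrable_count_iff.2 (hf i).norm

theorem tsum_eq_zero_of_odd {G : Type*} [InvolutiveNeg G] {f : G → ℝ} (hf : f.Odd) :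
    ∑' g, f g = 0 := by
  have h := (Equiv.neg G).tsum_eq f
  simp only [Equiv.neg_apply, hf _, tsum_neg] at h
  linarith

theorem mul_tsum_le_mul_tsum_sq_mul {Ω : Type*} {w : Ω → ℝ} {X : Ω → ℤ} {e : Equiv.Perm Ω}
    {K : ℝ} (hK : 0 ≤ K) (hw₀ : ∀ ω, 0 ≤ w ω) (hw : Summable w)
    (hX : Summable fun ω => (X ω : ℝ) ^ 2 * w ω) (hXe : ∀ ω, X (e ω) = X ω + 1)
    (hwe : ∀ ω, 2 * (K * w ω) ≤ w (e ω) + w (e.symm ω)) :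
    K * ∑' ω, w ω ≤ (1 + K) * ∑' ω, (X ω : ℝ) ^ 2 * w ω := by
  set G : Ω → ℝ := fun ω => (X ω : ℝ) ^ 2 * w ω
  have G_nonneg (ω : Ω) : 0 ≤ G ω := mul_nonneg (sq_nonneg _) (hw₀ ω)
  have G_eq_of_sq_eq_one {ω : Ω} (h : X ω ^ 2 = 1) : G ω = w ω := by
    have : (X ω : ℝ) ^ 2 = 1 := mod_cast h
    simp only [G, this, one_mul]
  have X_symm (ω : Ω) : X (e.symm ω) = X ω - 1 := by
    rw [eq_sub_iff_add_eq, ← hXe, e.apply_symm_apply]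
  have pointwise (ω : Ω) : 2 * (K * w ω) ≤ G (e ω) + G (e.symm ω) + 2 * (K * G ω) := by
    by_cases hω : X ω = 0
    · have := mul_nonneg hK (G_nonneg ω)
      rw [G_eq_of_sq_eq_one (by simp [hXe, hω]), G_eq_of_sq_eq_one (by simp [X_symm, hω])]
      linarith [hwe ω]
    · have one_le_sq : (1 : ℝ) ≤ (X ω : ℝ) ^ 2 :=
        mod_cast Int.add_one_le_iff.2 (sq_pos_of_ne_zero hω)
      have := mul_le_mul_of_nonneg_left (le_mul_of_one_le_left (hw₀ ω) one_le_sq) hK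
      linarith [G_nonneg (e ω), G_nonneg (e.symm ω)]
  have G_shift : HasSum (fun ω => G (e ω)) (∑' ω, G ω) := e.hasSum_iff.2 hX.hasSum
  have G_symm_shift : HasSum (fun ω => G (e.symm ω)) (∑' ω, G ω) :=
    e.symm.hasSum_iff.2 hX.hasSum
  have := hasSum_le pointwise ((hw.hasSum.mul_left K).mul_left 2)
    ((G_shift.add G_symm_shift).add ((hX.hasSum.mul_left K).mul_left 2))
  linarith

section Energy

variable {α β q : ℝ} {φ ψ : ℤ → ℤ}

/-- The interaction of the sites `p.1` and `p.2`, whose sum over all pairs is the energy at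
`β = 1`. The diagonal needs no special case when `α ≠ 0`, since then `0 ^ (-α) = 0`. -/
noncomputable def pairEnergy (α q : ℝ) (φ : ℤ → ℤ) (p : ℤ × ℤ) : ℝ :=
  |(φ p.1 - φ p.2 : ℝ)| ^ q * |(p.1 - p.2 : ℝ)| ^ (-α)

theorem chainEnergy_eq_mul_tsum_pairEnergy (hα : α ≠ 0) (β q : ℝ) (φ : ℤ → ℤ) :
    chainEnergy β α q φ = β * ∑' p, pairEnergy α q φ p := by
  unfold chainEnergy pairEnergy
  congr 2 with p
  split_ifs with h
  · simp [h, zero_rpow (neg_ne_zero.2 hα)]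
  · push_cast
    rw [rpow_neg (abs_nonneg _), div_eq_mul_inv]

theorem pairEnergy_nonneg (α q : ℝ) (φ : ℤ → ℤ) (p : ℤ × ℤ) : 0 ≤ pairEnergy α q φ p := by
  unfold pairEnergy
  positivity

theorem pairEnergy_add_add_pairEnergy_sub_le (hq₀ : 0 ≤ q) (hq₂ : q ≤ 2) (α : ℝ)
    (φ ψ : ℤ → ℤ) (p : ℤ × ℤ) :
    pairEnergy α q (φ + ψ) p + pairEnergy α q (φ - ψ) p ≤
      2 * (pairEnergy α q φ p + pairEnergy α q ψ p) := by
  simp only [pairEnergy, ← add_mul, ← mul_assoc]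
  gcongr
  simp only [Pi.add_apply, Pi.sub_apply, Int.cast_add, Int.cast_sub, add_sub_add_comm,
    sub_sub_sub_comm _ (ψ p.1 : ℝ)]
  exact norm_add_rpow_add_norm_sub_rpow_le hq₀ hq₂ (φ p.1 - φ p.2 : ℝ) (ψ p.1 - ψ p.2)

theorem summable_pairEnergy (hα : 1 < α) (hq₀ : 0 ≤ q) (hq₂ : q ≤ 2)
    (hφ : Summable fun i => |(φ i : ℝ)| ^ q) : Summable (pairEnergy α q φ) := by
  have sheared : Summable fun p : ℤ × ℤ => |(φ p.1 : ℝ)| ^ q * |(p.2 : ℝ)| ^ (-α) :=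
    hφ.mul_of_nonneg (summable_abs_int_rpow hα) (fun _ => by positivity) fun _ => by positivity
  have fst_bound : Summable fun p : ℤ × ℤ => |(φ p.1 : ℝ)| ^ q * |(p.1 - p.2 : ℝ)| ^ (-α) := by
    have inj : Function.Injective fun p : ℤ × ℤ => (p.1, p.1 - p.2) := by
      rintro ⟨i, j⟩ ⟨k, l⟩ h
      simp only [Prod.mk.injEq] at h ⊢
      omega
    simpa [Function.comp_def] using sheared.comp_injective inj
  have snd_bound : Summable fun p : ℤ × ℤ => |(φ p.2 : ℝ)| ^ q * |(p.1 - p.2 : ℝ)| ^ (-α) := by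
    simpa [Function.comp_def, abs_sub_comm] using fst_bound.comp_injective Prod.swap_injective
  refine ((fst_bound.add snd_bound).mul_left 2).of_nonneg_of_le (pairEnergy_nonneg α q φ)
    fun p => ?_
  have abs_sub_rpow_le :
      |(φ p.1 - φ p.2 : ℝ)| ^ q ≤ 2 * (|(φ p.1 : ℝ)| ^ q + |(φ p.2 : ℝ)| ^ q) :=
    (le_add_of_nonneg_left (by positivity)).trans
      (norm_add_rpow_add_norm_sub_rpow_le hq₀ hq₂ (φ p.1 : ℝ) (φ p.2))
  calc pairEnergy α q φ p
      ≤ 2 * (|(φ p.1 : ℝ)| ^ q + |(φ p.2 : ℝ)| ^ q) * |(p.1 - p.2 : ℝ)| ^ (-α) := by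
        unfold pairEnergy
        gcongr
    _ = _ := by ring

theorem chainEnergy_add_add_chainEnergy_sub_le (hβ : 0 ≤ β) (hα : α ≠ 0) (hq₀ : 0 ≤ q)
    (hq₂ : q ≤ 2) (hφ : Summable (pairEnergy α q φ)) (hψ : Summable (pairEnergy α q ψ)) :
    chainEnergy β α q (φ + ψ) + chainEnergy β α q (φ - ψ) ≤
      2 * (chainEnergy β α q φ + chainEnergy β α q ψ) := by
  have parallelogram := pairEnergy_add_add_pairEnergy_sub_le hq₀ hq₂ α φ ψ
  have bound := (hφ.add hψ).mul_left 2
  have hadd : Summable (pairEnergy α q (φ + ψ)) :=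
    bound.of_nonneg_of_le (pairEnergy_nonneg _ _ _) fun p =>
      (le_add_of_nonneg_right (pairEnergy_nonneg _ _ _ _)).trans (parallelogram p)
  have hsub : Summable (pairEnergy α q (φ - ψ)) :=
    bound.of_nonneg_of_le (pairEnergy_nonneg _ _ _) fun p =>
      (le_add_of_nonneg_left (pairEnergy_nonneg _ _ _ _)).trans (parallelogram p)
  simp only [chainEnergy_eq_mul_tsum_pairEnergy hα, ← mul_add]
  rw [mul_left_comm]
  gcongr
  exact hasSum_le parallelogram (hadd.hasSum.add hsub.hasSum)
    ((hφ.hasSum.add hψ.hasSum).mul_left 2)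

theorem chainWeight_pos (β α q : ℝ) (φ : ℤ → ℤ) : 0 < chainWeight β α q φ :=
  exp_pos _

theorem two_mul_chainWeight_mul_le (hβ : 0 ≤ β) (hα : α ≠ 0) (hq₀ : 0 ≤ q)
    (hq₂ : q ≤ 2) (hφ : Summable (pairEnergy α q φ)) (hψ : Summable (pairEnergy α q ψ)) :
    2 * (chainWeight β α q φ * chainWeight β α q ψ) ≤
      chainWeight β α q (φ + ψ) + chainWeight β α q (φ - ψ) := by
  unfold chainWeight
  rw [← exp_add]
  refine two_mul_exp_le_exp_add_exp ?_
  linarith [chainEnergy_add_add_chainEnergy_sub_le hβ hα hq₀ hq₂ hφ hψ]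

theorem chainWeight_neg (β α q : ℝ) (φ : ℤ → ℤ) :
    chainWeight β α q (-φ) = chainWeight β α q φ := by
  simp only [chainWeight, chainEnergy, Pi.neg_apply, neg_sub_neg, Int.cast_sub, abs_sub_comm]

end Energy

namespace ChainConfig

/-- The configurations of the chain of length `N` as a subgroup of all height functions. Its
coercion to a type is definitionally `ChainConfig N`, which lets the group structure transfer. -/
def subgroup (N : ℕ) : AddSubgroup (ℤ → ℤ) where
  carrier := {φ | ∀ k : ℤ, (N : ℤ) < |k| → φ k = 0}
  zero_mem' _ _ := rfl
  add_mem' hφ hψ k hk := by simp [hφ k hk, hψ k hk]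
  neg_mem' hφ k hk := by simp [hφ k hk]

instance (N : ℕ) : AddCommGroup (ChainConfig N) :=
  inferInstanceAs (AddCommGroup (subgroup N))

variable {N : ℕ} {α β q : ℝ}

theorem val_add (φ ψ : ChainConfig N) : (φ + ψ).val = φ.val + ψ.val := rfl

theorem val_sub (φ ψ : ChainConfig N) : (φ - ψ).val = φ.val - ψ.val := rfl

theorem val_neg (φ : ChainConfig N) : (-φ).val = -φ.val := rfl

/-- The configuration of height `1` at the origin and `0` elsewhere, along which the chain is
shifted to compare the heights `0` and `±1`. -/
def spike (N : ℕ) : ChainConfig N :=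
  ⟨Pi.single 0 1, fun k hk => Pi.single_eq_of_ne (by rintro rfl; simp at hk; omega) 1⟩

theorem val_spike (N : ℕ) : (spike N).val = Pi.single 0 1 := rfl

theorem eq_zero_of_notMem_Icc (φ : ChainConfig N) {k : ℤ} (hk : k ∉ Finset.Icc (-N : ℤ) N) :
    φ.val k = 0 :=
  φ.2 k (not_le.1 fun h => hk (Finset.mem_Icc.2 (abs_le.1 h)))

theorem restrict_Icc_injective (N : ℕ) : Function.Injective
    fun (φ : ChainConfig N) (i : Finset.Icc (-N : ℤ) N) => φ.val i := by
  intro φ ψ h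
  refine Subtype.ext (funext fun k => ?_)
  by_cases hk : k ∈ Finset.Icc (-N : ℤ) N
  · exact congrFun h ⟨k, hk⟩
  · rw [φ.eq_zero_of_notMem_Icc hk, ψ.eq_zero_of_notMem_Icc hk]

theorem summable_pairEnergy (hα : 1 < α) (hq₀ : 0 < q) (hq₂ : q ≤ 2) (φ : ChainConfig N) :
    Summable (pairEnergy α q φ.val) := by
  refine _root_.summable_pairEnergy hα hq₀.le hq₂
    (summable_of_ne_finset_zero (s := Finset.Icc (-N : ℤ) N) fun k hk => ?_)
  rw [φ.eq_zero_of_notMem_Icc hk, Int.cast_zero, abs_zero, zero_rpow hq₀.ne']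

/-- Only the interactions with the boundary site `N + 1`, where the height is `0`, are kept. -/
theorem mul_sum_abs_rpow_le_chainEnergy (hβ : 0 ≤ β) (hα : 1 < α) (hq₀ : 0 < q) (hq₂ : q ≤ 2)
    (φ : ChainConfig N) :
    β * (2 * N + 1) ^ (-α) * ∑ i ∈ Finset.Icc (-N : ℤ) N, |(φ.val i : ℝ)| ^ q ≤
      chainEnergy β α q φ.val := by
  have height_boundary : φ.val (N + 1) = 0 := φ.eq_zero_of_notMem_Icc (by simp)
  rw [chainEnergy_eq_mul_tsum_pairEnergy (by linarith), mul_assoc, Finset.mul_sum]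
  gcongr
  calc ∑ i ∈ Finset.Icc (-N : ℤ) N, (2 * N + 1 : ℝ) ^ (-α) * |(φ.val i : ℝ)| ^ q
      ≤ ∑ i ∈ Finset.Icc (-N : ℤ) N, pairEnergy α q φ.val (i, N + 1) := by
        refine Finset.sum_le_sum fun i hi => ?_
        obtain ⟨hi₁, hi₂⟩ := Finset.mem_Icc.1 hi
        have dist_pos : 0 < |(i - (N + 1 : ℤ) : ℝ)| := by
          rw [abs_pos]
          exact_mod_cast (by omega : i - (N + 1 : ℤ) ≠ 0)
        have dist_le : |(i - (N + 1 : ℤ) : ℝ)| ≤ 2 * N + 1 := by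
          exact_mod_cast (abs_le.2 ⟨by omega, by omega⟩ : |i - (N + 1 : ℤ)| ≤ 2 * N + 1)
        simp only [pairEnergy, height_boundary, Int.cast_zero, sub_zero]
        rw [mul_comm]
        exact mul_le_mul_of_nonneg_left
          (rpow_le_rpow_of_nonpos dist_pos dist_le (by linarith)) (by positivity)
    _ = ∑ p ∈ Finset.Icc (-N : ℤ) N ×ˢ {(N + 1 : ℤ)}, pairEnergy α q φ.val p := by
        simp
    _ ≤ ∑' p, pairEnergy α q φ.val p :=
        (φ.summable_pairEnergy hα hq₀ hq₂).sum_le_tsum _ fun _ _ => pairEnergy_nonneg _ _ _ _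

theorem summable_abs_pow_mul_chainWeight (hβ : 0 < β) (hα : 1 < α) (hq₀ : 0 < q) (hq₂ : q ≤ 2)
    {k : ℤ} (hk : k ∈ Finset.Icc (-N : ℤ) N) (m : ℕ) :
    Summable fun φ : ChainConfig N => |(φ.val k : ℝ)| ^ m * chainWeight β α q φ.val := by
  set c : ℝ := β * (2 * N + 1) ^ (-α)
  have hc : 0 < c := by positivity
  let g (i : Finset.Icc (-N : ℤ) N) (n : ℤ) : ℝ :=
    |(n : ℝ)| ^ (if i = ⟨k, hk⟩ then m else 0) * exp (-c * |(n : ℝ)| ^ q)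
  have prod_g (φ : ChainConfig N) : ∏ i, g i (φ.val i) =
      |(φ.val k : ℝ)| ^ m * exp (-(c * ∑ i ∈ Finset.Icc (-N : ℤ) N, |(φ.val i : ℝ)| ^ q)) := by
    rw [← Finset.sum_coe_sort, Finset.mul_sum, ← Finset.sum_neg_distrib, exp_sum]
    simp only [g, Finset.prod_mul_distrib, pow_ite, pow_zero, Finset.prod_ite_eq',
      Finset.mem_univ, if_true, neg_mul]
  have summable_prod_g : Summable fun φ : ChainConfig N => ∏ i, g i (φ.val i) :=
    (summable_pi_prod fun i =>
      summable_abs_int_pow_mul_exp_neg_mul_abs_rpow hc hq₀ _).comp_injective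
        (restrict_Icc_injective N)
  refine summable_prod_g.of_nonneg_of_le
    (fun φ => mul_nonneg (by positivity) (chainWeight_pos _ _ _ _).le) fun φ => ?_
  rw [prod_g]
  unfold chainWeight
  gcongr
  exact φ.mul_sum_abs_rpow_le_chainEnergy hβ.le hα hq₀ hq₂

theorem summable_chainWeight (hβ : 0 < β) (hα : 1 < α) (hq₀ : 0 < q) (hq₂ : q ≤ 2) :
    Summable fun φ : ChainConfig N => chainWeight β α q φ.val := by
  simpa using summable_abs_pow_mul_chainWeight (N := N) hβ hα hq₀ hq₂ (k := 0) (by simp) 0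

theorem summable_sq_mul_chainWeight (hβ : 0 < β) (hα : 1 < α) (hq₀ : 0 < q) (hq₂ : q ≤ 2) :
    Summable fun φ : ChainConfig N => (φ.val 0 : ℝ) ^ 2 * chainWeight β α q φ.val := by
  simpa using summable_abs_pow_mul_chainWeight (N := N) hβ hα hq₀ hq₂ (k := 0) (by simp) 2

end ChainConfig

section Variance

variable {α β q : ℝ}

theorem chainZ_pos (hβ : 0 < β) (hα : 1 < α) (hq₀ : 0 < q) (hq₂ : q ≤ 2) (N : ℕ) :
    0 < chainZ N β α q :=
  (ChainConfig.summable_chainWeight hβ hα hq₀ hq₂).tsum_pos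
    (fun _ => (chainWeight_pos _ _ _ _).le) 0 (chainWeight_pos _ _ _ _)

theorem chainMean_eq_zero (N : ℕ) (β α q : ℝ) : chainMean N β α q = 0 := by
  have height_mul_weight_odd : Function.Odd fun φ : ChainConfig N =>
      (φ.val 0 : ℝ) * chainWeight β α q φ.val := fun φ => by
    simp [ChainConfig.val_neg, chainWeight_neg]
  rw [chainMean, tsum_eq_zero_of_odd height_mul_weight_odd, zero_div]

theorem chainWeight_spike_mul_chainZ_le (hβ : 0 < β) (hα : 1 < α) (hq₀ : 0 < q) (hq₂ : q ≤ 2)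
    (N : ℕ) :
    chainWeight β α q (Pi.single 0 1) * chainZ N β α q ≤
      (1 + chainWeight β α q (Pi.single 0 1)) *
        ∑' φ : ChainConfig N, (φ.val 0 : ℝ) ^ 2 * chainWeight β α q φ.val := by
  refine mul_tsum_le_mul_tsum_sq_mul (e := Equiv.addRight (ChainConfig.spike N))
    (chainWeight_pos _ _ _ _).le (fun φ => (chainWeight_pos β α q φ.val).le)
    (ChainConfig.summable_chainWeight hβ hα hq₀ hq₂)
    (ChainConfig.summable_sq_mul_chainWeight hβ hα hq₀ hq₂) (fun φ => ?_) fun φ => ?_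
  · rw [Equiv.coe_addRight, ChainConfig.val_add, Pi.add_apply, ChainConfig.val_spike,
      Pi.single_eq_same]
  · simp only [Equiv.addRight_symm, Equiv.coe_addRight, ← sub_eq_add_neg]
    rw [ChainConfig.val_add, ChainConfig.val_sub, mul_comm (chainWeight β α q _)]
    exact two_mul_chainWeight_mul_le hβ.le (by linarith) hq₀.le hq₂
      (φ.summable_pairEnergy hα hq₀ hq₂) ((ChainConfig.spike N).summable_pairEnergy hα hq₀ hq₂)

theorem chainWeight_spike_div_le_chainVar (hβ : 0 < β) (hα : 1 < α) (hq₀ : 0 < q) (hq₂ : q ≤ 2)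
    (N : ℕ) :
    chainWeight β α q (Pi.single 0 1) / (1 + chainWeight β α q (Pi.single 0 1)) ≤
      chainVar N β α q := by
  have hK := chainWeight_pos β α q (Pi.single 0 1)
  rw [chainVar, chainMean_eq_zero, zero_pow two_ne_zero, sub_zero,
    div_le_div_iff₀ (by positivity) (chainZ_pos hβ hα hq₀ hq₂ N), mul_comm (tsum _)]
  exact chainWeight_spike_mul_chainZ_le hβ hα hq₀ hq₂ N

end Variance

theorem qSOS_chain_lower_bound_alpha_le_two_general {α β q : ℝ} (hβ : 0 < β) (hq₀ : 0 < q)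
    (hq₂ : q ≤ 2) (hα : 1 < α) :
    ∃ c : ℝ, 0 < c ∧ ∀ N : ℕ, c ≤ chainVar N β α q := by
  have spike_weight_pos := chainWeight_pos β α q (Pi.single 0 1)
  exact ⟨_, div_pos spike_weight_pos (by linarith),
    chainWeight_spike_div_le_chainVar hβ hα hq₀ hq₂⟩

/-- **Lower bound for the `q`-SOS long-range chain for `α ∈ (1,2]`.**
For every `β ∈ (0,∞)`, every `q ∈ (0,2)` and every `α ∈ (1,2]`, there exists `c_β > 0`
such that for every `N ≥ 1`, `c_β ≤ Var^{q-SOS}_{N,β,α}[φ(0)]`. -/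
theorem qSOS_chain_lower_bound_alpha_le_two
    (β : ℝ) (hβ : 0 < β) (q : ℝ) (hq₀ : 0 < q) (hq₂ : q < 2)
    (α : ℝ) (hα₁ : 1 < α) (hα₂ : α ≤ 2) :
    ∃ c : ℝ, 0 < c ∧
      ∀ N : ℕ, 1 ≤ N → c ≤ chainVar N β α q := by
  obtain ⟨c, hc, hvar⟩ := qSOS_chain_lower_bound_alpha_le_two_general hβ hq₀ hq₂.le hα₁
  exact ⟨c, hc, fun N _ => hvar N⟩
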